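/- arXiv:2007.09783 — 2 statements merged into one kernel-verified Lean document; each statement's English description precedes it below -/
import Mathlib

section
/- Let $A$ be a unital C*-algebra, let $G$ be a finite group, and let $\alpha: G \to \mathrm{Aut}(A)$ be strictly approximately inner. If $A$ is stably finite, then the radius of comparison satisfies $\mathrm{rc}(A) \leq \mathrm{rc}(C^*(G, A, \alpha))$. -/
open Filter Topology
open scoped ENNReal

/-- Cuntz subequivalence. -/
def CuntzSub {B : Type*} [Mul B] [Star B] [TopologicalSpace B] (a b : B) : Prop :=
  ∃ c : ℕ → B, Tendsto (fun n => c n * b * star (c n)) atTop (𝓝 a)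

/-- The defining conditions (a)-(c) of a quasitrace (Definition 2.3 of the paper):
`ρ(a*a) = ρ(aa*) ≥ 0`, `ρ(b + ic) = ρ(b) + iρ(c)` for self-adjoint `b, c`, and linearity on
commuting self-adjoint elements (i.e. on commutative C*-subalgebras). -/
def IsQuasitraceFun {B : Type*} [NonUnitalRing B] [StarRing B] [Module ℂ B]
    (ρ : B → ℂ) : Prop :=
  (∀ a : B, ρ (star a * a) = ρ (a * star a)) ∧
  (∀ a : B, 0 ≤ (ρ (star a * a)).re ∧ (ρ (star a * a)).im = 0) ∧
  (∀ b c : B, IsSelfAdjoint b → IsSelfAdjoint c →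
    ρ (b + Complex.I • c) = ρ b + Complex.I * ρ c) ∧
  (∀ b c : B, IsSelfAdjoint b → IsSelfAdjoint c → b * c = c * b →
    ρ (b + c) = ρ b + ρ c) ∧
  (∀ (r : ℝ) (b : B), IsSelfAdjoint b → ρ ((r : ℂ) • b) = (r : ℂ) * ρ b)

/-- `a ⊗ e₁₁ ∈ M₂(B)`. -/
def cornerEmbed {B : Type*} [Zero B] (a : B) : Matrix (Fin 2) (Fin 2) B :=
  Matrix.of fun i j => if i = 0 ∧ j = 0 then a else 0

/-- A quasitrace: a quasitrace functional that extends to `M₂(B)` (condition (d) of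
Definition 2.3). -/
def IsQuasitrace {B : Type*} [NonUnitalRing B] [StarRing B] [Module ℂ B]
    (ρ : B → ℂ) : Prop :=
  IsQuasitraceFun ρ ∧ ∃ ρ₂ : Matrix (Fin 2) (Fin 2) B → ℂ,
    IsQuasitraceFun ρ₂ ∧ ∀ a : B, ρ₂ (cornerEmbed a) = ρ a

/-- The canonical embedding `M_n(B) → M_{n+1}(B)` (padding with zeros). -/
def matEmbed {B : Type*} [Zero B] {n : ℕ} (a : Matrix (Fin n) (Fin n) B) :
    Matrix (Fin (n + 1)) (Fin (n + 1)) B :=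
  Matrix.of fun i j =>
    if h : (i : ℕ) < n ∧ (j : ℕ) < n then a ⟨i, h.1⟩ ⟨j, h.2⟩ else 0

/-- A normalized quasitrace on `B`, together with its (compatible) extensions to all matrix
algebras `M_n(B)`, i.e. to `M_∞(B)`. -/
structure QTSeq (B : Type*) [Ring B] [StarRing B] [Module ℂ B] where
  ρ : ∀ n : ℕ, Matrix (Fin n) (Fin n) B → ℂ
  quasi : ∀ n, IsQuasitrace (ρ n)
  compat : ∀ (n : ℕ) (a : Matrix (Fin n) (Fin n) B), ρ (n + 1) (matEmbed a) = ρ n a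
  normalized : ρ 1 1 = 1

/-- `HasDim ρ a d` expresses `d_ρ(a) = lim_k ρ(a^{1/k}) = d`: there is a sequence of positive
`(k+1)`-st roots `f k` of `a` with `ρ(f k) → d`. -/
def HasDim {M : Type*} [Monoid M] [Star M] (ρ : M → ℂ) (a : M) (d : ℝ) : Prop :=
  ∃ f : ℕ → M, (∀ k : ℕ, (∃ c : M, f k = star c * c) ∧ (f k) ^ (k + 1) = a) ∧
    Tendsto (fun k => (ρ (f k)).re) atTop (𝓝 d)

/-- `B` has `r`-comparison: whenever `a, b ∈ M_∞(B)₊` satisfy `d_ρ(a) + r < d_ρ(b)` for all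
normalized quasitraces `ρ`, then `a ≾ b`. -/
def RComparison (B : Type*) [Ring B] [StarRing B] [Module ℂ B] [TopologicalSpace B]
    (r : ℝ) : Prop :=
  ∀ (n : ℕ) (a b : Matrix (Fin n) (Fin n) B),
    (∃ c : Matrix (Fin n) (Fin n) B, a = star c * c) →
    (∃ c : Matrix (Fin n) (Fin n) B, b = star c * c) →
    (∀ (ρ : QTSeq B) (da db : ℝ), HasDim (ρ.ρ n) a da → HasDim (ρ.ρ n) b db →
      da + r < db) →
    CuntzSub a b

/-- The radius of comparison of `B`: the infimum of the `r ≥ 0` such that `B` has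
`r`-comparison (`⊤` if there is none). -/
noncomputable def radiusOfComparison (B : Type*) [Ring B] [StarRing B] [Module ℂ B]
    [TopologicalSpace B] : ℝ≥0∞ :=
  sInf {x : ℝ≥0∞ | ∃ r : ℝ, 0 ≤ r ∧ x = ENNReal.ofReal r ∧ RComparison B r}

/-- `B` is stably finite: one-sided inverses in matrix algebras over `B` are two-sided. -/
def StablyFinite (B : Type*) [Ring B] [StarRing B] : Prop :=
  ∀ (n : ℕ) (x : Matrix (Fin n) (Fin n) B), star x * x = 1 → x * star x = 1

/-- A realization of the crossed product `C*(G, A, α)` of a finite group action. -/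
structure CrossedProduct (G : Type*) [Group G] [Fintype G]
    (A B : Type*) [CStarAlgebra A] [CStarAlgebra B] (α : G → A → A) where
  ι : A →⋆ₐ[ℂ] B
  u : G → B
  u_mul : ∀ g h : G, u g * u h = u (g * h)
  u_star : ∀ g : G, star (u g) = u g⁻¹
  u_one : u 1 = 1
  ι_isometry : ∀ a : A, ‖ι a‖ = ‖a‖
  covariant : ∀ (g : G) (a : A), u g * ι a * star (u g) = ι (α g a)
  spans : ∀ b : B, ∃ f : G → A, b = ∑ g : G, ι (f g) * u g
  coeff_norm_le : ∀ (f : G → A) (g : G), ‖f g‖ ≤ ‖∑ h : G, ι (f h) * u h‖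

/-- Strict approximate innerness of an action of a finite group on a unital C*-algebra. -/
def StrictlyApproxInner {G : Type*} [Group G] {A : Type*} [CStarAlgebra A]
    (α : G → A → A) : Prop :=
  ∀ (F : Finset A) (ε : ℝ), 0 < ε → ∃ z : G →* unitary A,
    ∀ g : G, ∀ a ∈ F, ‖α g a - (z g : A) * a * star ((z g : A))‖ < ε

/-!
A unital `*`-homomorphism `φ : A → B` gives `rc(A) ≤ rc(B)` once Cuntz subequivalence of matrices
over `A` can be tested in `B`: quasitraces on `B` restrict to `A`, and the dimension functions of a
matrix over `A` do not change because, by uniqueness, its positive roots over `B` are the images of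
those over `A`. Cuntz subequivalence can be tested in `B` as soon as `φ` has an asymptotic left
inverse, a net of uniformly bounded additive maps `Φ : B → A` that is asymptotically multiplicative
and `*`-preserving: apply `Φ` to a relation `c φ(b) c* ≈ φ(a)`.

For a strictly approximately inner action, unitary representations `z` of `G` in `A` implementing
`α` better and better provide these maps, by substituting `z_g` for `u_g` in `∑ f_g u_g`. That `z`
is a homomorphism makes the substitution asymptotically multiplicative, and the coefficients being
controlled by the norm of the sum makes it bounded by `|G|`.
-/

open scoped NNReal

section PositiveRoots

/-- Positivity of an element of a C*-algebra in the order-free form `a = c*c`, so that it makes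
sense for `Matrix n n A`, which carries no order. -/
def IsStarMulSelf {M : Type*} [Mul M] [Star M] (a : M) : Prop :=
  ∃ c, a = star c * c

lemma IsStarMulSelf.map {M N F : Type*} [Mul M] [Star M] [Mul N] [Star N] [FunLike F M N]
    [MulHomClass F M N] [StarHomClass F M N] {a : M} (ha : IsStarMulSelf a) (φ : F) :
    IsStarMulSelf (φ a) := by
  obtain ⟨c, rfl⟩ := ha
  exact ⟨φ c, by rw [map_mul, map_star]⟩

lemma existsUnique_nonneg_pow_eq {A : Type*} [CStarAlgebra A] [PartialOrder A] [StarOrderedRing A]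
    {a : A} (ha : 0 ≤ a) {k : ℕ} (hk : k ≠ 0) : ∃! b : A, 0 ≤ b ∧ b ^ k = a := by
  have hk' : (k : ℝ≥0) ≠ 0 := Nat.cast_ne_zero.2 hk
  have nnrpow_eq_pow (b : A) (hb : 0 ≤ b) : b ^ (k : ℝ≥0) = b ^ k := by
    rw [CFC.nnrpow_eq_rpow (pos_iff_ne_zero.2 hk'), NNReal.coe_natCast, CFC.rpow_natCast b k hb]
  refine ⟨a ^ (k : ℝ≥0)⁻¹, ⟨CFC.nnrpow_nonneg, ?_⟩, fun b ⟨hb, hba⟩ => ?_⟩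
  · rw [← nnrpow_eq_pow _ CFC.nnrpow_nonneg, CFC.nnrpow_inv_nnrpow a hk' ha]
  · exact ((CFC.nnrpow_inv_eq a b hk' ha hb).2 (by rw [nnrpow_eq_pow b hb, hba])).symm

lemma existsUnique_isStarMulSelf_pow_eq {A : Type*} [CStarAlgebra A] {a : A}
    (ha : IsStarMulSelf a) {k : ℕ} (hk : k ≠ 0) : ∃! b : A, IsStarMulSelf b ∧ b ^ k = a := by
  let : PartialOrder A := CStarAlgebra.spectralOrder A
  have : StarOrderedRing A := CStarAlgebra.spectralOrderedRing A
  have nonneg_iff (b : A) : 0 ≤ b ↔ IsStarMulSelf b := CStarAlgebra.nonneg_iff_eq_star_mul_self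
  simpa only [nonneg_iff] using existsUnique_nonneg_pow_eq ((nonneg_iff a).2 ha) hk

lemma existsUnique_matrix_isStarMulSelf_pow_eq {A n : Type*} [CStarAlgebra A] [Fintype n]
    [DecidableEq n] {a : Matrix n n A} (ha : IsStarMulSelf a) {k : ℕ} (hk : k ≠ 0) :
    ∃! b : Matrix n n A, IsStarMulSelf b ∧ b ^ k = a := by
  let : PartialOrder A := CStarAlgebra.spectralOrder A
  have : StarOrderedRing A := CStarAlgebra.spectralOrderedRing A
  exact existsUnique_isStarMulSelf_pow_eq (A := CStarMatrix n n A) ha hk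

end PositiveRoots

section Restriction

/-- The amplification `M_n(A) → M_n(B)` of a unital `*`-homomorphism `A → B`, applied entrywise. -/
def matrixAmplification (n : Type*) [Fintype n] [DecidableEq n] {R A B : Type*} [CommSemiring R]
    [Semiring A] [StarRing A] [Algebra R A] [Semiring B] [StarRing B] [Algebra R B]
    (φ : A →⋆ₐ[R] B) : Matrix n n A →⋆ₐ[R] Matrix n n B where
  __ := φ.toAlgHom.mapMatrix
  map_star' a := by
    ext i j
    exact map_star φ (a j i)

section Embeddings

variable {A B F : Type*} [Zero A] [Zero B] [FunLike F A B] [ZeroHomClass F A B]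

lemma cornerEmbed_map (a : A) (φ : F) : (cornerEmbed a).map φ = cornerEmbed (φ a) := by
  ext i j
  simp [cornerEmbed, apply_ite φ]

lemma matEmbed_map {n : ℕ} (a : Matrix (Fin n) (Fin n) A) (φ : F) :
    (matEmbed a).map φ = matEmbed (a.map φ) := by
  ext i j
  simp [matEmbed, apply_dite φ]

end Embeddings

lemma IsQuasitraceFun.comp {M N F : Type*} [NonUnitalRing M] [StarRing M] [Module ℂ M]
    [NonUnitalRing N] [StarRing N] [Module ℂ N] [FunLike F M N] [NonUnitalAlgHomClass F ℂ M N]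
    [StarHomClass F M N] {ρ : N → ℂ} (hρ : IsQuasitraceFun ρ) (φ : F) :
    IsQuasitraceFun (fun x => ρ (φ x)) := by
  obtain ⟨h_comm, h_nonneg, h_complex, h_add, h_smul⟩ := hρ
  refine ⟨fun a => ?_, fun a => ?_, fun b c hb hc => ?_, fun b c hb hc hbc => ?_,
    fun r b hb => ?_⟩
  · simp only [map_mul, map_star, h_comm]
  · simpa only [map_mul, map_star] using h_nonneg (φ a)
  · simpa only [map_add, map_smul] using h_complex _ _ (hb.map φ) (hc.map φ)
  · simpa only [map_add] using
      h_add _ _ (hb.map φ) (hc.map φ) (by rw [← map_mul, hbc, map_mul])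
  · simpa only [map_smul] using h_smul r _ (hb.map φ)

section StarAlgHom

variable {A B : Type*} [Ring A] [StarRing A] [Algebra ℂ A] [Ring B] [StarRing B] [Algebra ℂ B]

lemma IsQuasitrace.comp {ρ : B → ℂ} (hρ : IsQuasitrace ρ) (φ : A →⋆ₐ[ℂ] B) :
    IsQuasitrace (fun x => ρ (φ x)) := by
  obtain ⟨hρ, ρ₂, hρ₂, hcorner⟩ := hρ
  refine ⟨hρ.comp φ, _, hρ₂.comp (matrixAmplification (Fin 2) φ), fun a => ?_⟩
  exact (congrArg ρ₂ (cornerEmbed_map a φ)).trans (hcorner (φ a))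

/-- The restriction of a normalized quasitrace on `B` along a unital `*`-homomorphism `A → B`. -/
def QTSeq.restrict (σ : QTSeq B) (φ : A →⋆ₐ[ℂ] B) : QTSeq A where
  ρ n a := σ.ρ n (a.map φ)
  quasi n := (σ.quasi n).comp (matrixAmplification (Fin n) φ)
  compat n a := by rw [matEmbed_map, σ.compat]
  normalized := by rw [Matrix.map_one _ (map_zero φ) (map_one φ), σ.normalized]

end StarAlgHom

variable {A B : Type*} [CStarAlgebra A] [CStarAlgebra B]

lemma HasDim.restrict {n : Type*} [Fintype n] [DecidableEq n] (φ : A →⋆ₐ[ℂ] B)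
    {ρ : Matrix n n B → ℂ} {a : Matrix n n A} (ha : IsStarMulSelf a) {d : ℝ}
    (h : HasDim ρ (a.map φ) d) : HasDim (fun x => ρ (x.map φ)) a d := by
  let φₙ := matrixAmplification n φ
  obtain ⟨f, hf, hlim⟩ := h
  choose g hg _ using fun k : ℕ => existsUnique_matrix_isStarMulSelf_pow_eq ha k.succ_ne_zero
  have hfg (k : ℕ) : f k = φₙ (g k) :=
    (existsUnique_matrix_isStarMulSelf_pow_eq (ha.map φₙ) k.succ_ne_zero).unique (hf k)
      ⟨(hg k).1.map φₙ, by rw [← map_pow, (hg k).2]⟩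
  simp only [hfg] at hlim
  exact ⟨g, hg, hlim⟩

lemma RComparison.of_cuntzSub_of_cuntzSub_map (φ : A →⋆ₐ[ℂ] B)
    (hφ : ∀ (n : ℕ) (a b : Matrix (Fin n) (Fin n) A),
      CuntzSub (a.map φ) (b.map φ) → CuntzSub a b)
    {r : ℝ} (hB : RComparison B r) : RComparison A r := by
  intro n a b ha hb hab
  let φₙ := matrixAmplification (Fin n) φ
  refine hφ n a b <| hB n _ _ (IsStarMulSelf.map ha φₙ) (IsStarMulSelf.map hb φₙ) ?_
  intro σ da db hda hdb
  exact hab (σ.restrict φ) da db (hda.restrict φ ha) (hdb.restrict φ hb)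

lemma radiusOfComparison_le_of_cuntzSub_of_cuntzSub_map (φ : A →⋆ₐ[ℂ] B)
    (hφ : ∀ (n : ℕ) (a b : Matrix (Fin n) (Fin n) A),
      CuntzSub (a.map φ) (b.map φ) → CuntzSub a b) :
    radiusOfComparison A ≤ radiusOfComparison B := by
  refine sInf_le_sInf ?_
  rintro _ ⟨r, hr, rfl, hB⟩
  exact ⟨r, hr, rfl, hB.of_cuntzSub_of_cuntzSub_map φ hφ⟩

end Restriction

section AsymptoticRetraction

/-- The net `Φ` of uniformly bounded additive maps `B → A` is an asymptotic `*`-homomorphism and an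
asymptotic left inverse of `φ`, as in the sequentially split `*`-homomorphisms of Barlak and
Szabó. -/
structure IsAsymptoticRetraction {κ A B : Type*} [NonUnitalSeminormedRing A] [Star A]
    [NonUnitalSeminormedRing B] [Star B] (φ : A → B) (Φ : κ → B →+ A) (l : Filter κ) : Prop where
  exists_nnnorm_le : ∃ C : ℝ≥0, ∀ k x, ‖Φ k x‖₊ ≤ C * ‖x‖₊
  tendsto_map : ∀ a, Tendsto (fun k => Φ k (φ a)) l (𝓝 a)
  tendsto_mul : ∀ x y, Tendsto (fun k => Φ k (x * y) - Φ k x * Φ k y) l (𝓝 0)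
  tendsto_star : ∀ x, Tendsto (fun k => Φ k (star x) - star (Φ k x)) l (𝓝 0)

lemma cuntzSub_iff_mem_closure {B : Type*} [Mul B] [Star B] [TopologicalSpace B]
    [FrechetUrysohnSpace B] {a b : B} :
    CuntzSub a b ↔ a ∈ closure (Set.range fun c => c * b * star c) := by
  rw [mem_closure_iff_seq_limit]
  constructor
  · rintro ⟨c, hc⟩
    exact ⟨_, fun m => ⟨c m, rfl⟩, hc⟩
  · rintro ⟨x, hx, hlim⟩
    choose c hc using hx
    exact ⟨c, by simpa only [hc] using hlim⟩

lemma tendsto_matrix_nhds_iff {κ m n R : Type*} [TopologicalSpace R] {l : Filter κ}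
    {f : κ → Matrix m n R} {M : Matrix m n R} :
    Tendsto f l (𝓝 M) ↔ ∀ i j, Tendsto (fun k => f k i j) l (𝓝 (M i j)) :=
  tendsto_pi_nhds.trans <| forall_congr' fun _ => tendsto_pi_nhds

namespace IsAsymptoticRetraction

section NonUnitalSeminormedRing

variable {κ A B : Type*} [NonUnitalSeminormedRing A] [Star A] [NonUnitalSeminormedRing B] [Star B]
  {φ : A → B} {Φ : κ → B →+ A} {l : Filter κ}

lemma isBoundedUnder_norm (h : IsAsymptoticRetraction φ Φ l) (x : B) :
    IsBoundedUnder (· ≤ ·) l (norm ∘ fun k => Φ k x) := by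
  obtain ⟨C, hC⟩ := h.exists_nnnorm_le
  exact isBoundedUnder_of ⟨C * ‖x‖, fun k => hC k x⟩

lemma tendsto_conj (h : IsAsymptoticRetraction φ Φ l) (c : B) (b : A) :
    Tendsto (fun k => Φ k (c * φ b * star c) - Φ k c * b * star (Φ k c)) l (𝓝 0) := by
  have h_left : Tendsto (fun k => Φ k (c * φ b) - Φ k c * b) l (𝓝 0) := by
    have h_mid : Tendsto (fun k => Φ k (φ b) - b) l (𝓝 0) := by
      simpa using (h.tendsto_map b).sub_const b
    simpa [mul_sub] using (h.tendsto_mul c (φ b)).add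
      (isBoundedUnder_le_mul_tendsto_zero (h.isBoundedUnder_norm c) h_mid)
  have h_left_mul := h_left.zero_mul_isBoundedUnder_le (h.isBoundedUnder_norm (star c))
  have h_mul_star : Tendsto (fun k => Φ k c * (b * (Φ k (star c) - star (Φ k c)))) l (𝓝 0) :=
    isBoundedUnder_le_mul_tendsto_zero (h.isBoundedUnder_norm c)
      (by simpa using (h.tendsto_star c).const_mul b)
  simpa [mul_sub, sub_mul, mul_assoc] using
    ((h.tendsto_mul (c * φ b) (star c)).add h_left_mul).add h_mul_star

lemma cuntzSub [l.NeBot] (h : IsAsymptoticRetraction φ Φ l) {a b : A}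
    (hab : CuntzSub (φ a) (φ b)) : CuntzSub a b := by
  obtain ⟨C, hC⟩ := h.exists_nnnorm_le
  obtain ⟨c, hc⟩ := hab
  rw [cuntzSub_iff_mem_closure, Metric.mem_closure_iff]
  intro ε hε
  obtain ⟨m, hm⟩ : ∃ m, C * ‖φ a - c m * φ b * star (c m)‖ < ε := by
    have hlim := ((hc.const_sub (φ a)).norm.const_mul (C : ℝ))
    rw [sub_self, norm_zero, mul_zero] at hlim
    exact (hlim.eventually_lt_const hε).exists
  set x := c m * φ b * star (c m)
  have hlim : Tendsto (fun k => ‖a - Φ k (φ a)‖ + C * ‖φ a - x‖ +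
      ‖Φ k x - Φ k (c m) * b * star (Φ k (c m))‖) l (𝓝 (C * ‖φ a - x‖)) := by
    simpa using (((h.tendsto_map a).const_sub a).norm.add_const (C * ‖φ a - x‖)).add
      (h.tendsto_conj (c m) b).norm
  obtain ⟨k, hk⟩ := (hlim.eventually_lt_const hm).exists
  refine ⟨_, ⟨Φ k (c m), rfl⟩, lt_of_le_of_lt ?_ hk⟩
  have hΦ : ‖Φ k (φ a) - Φ k x‖ ≤ C * ‖φ a - x‖ := by
    rw [← map_sub]
    exact hC k _
  calc dist a (Φ k (c m) * b * star (Φ k (c m)))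
      ≤ dist a (Φ k (φ a)) + dist (Φ k (φ a)) (Φ k x) + dist (Φ k x) _ := dist_triangle4 ..
    _ ≤ _ := by
      simp only [dist_eq_norm]
      gcongr

open scoped Matrix.Norms.Operator in
lemma mapMatrix (h : IsAsymptoticRetraction φ Φ l) (n : Type*) [Fintype n] :
    IsAsymptoticRetraction (fun M : Matrix n n A => M.map φ) (fun k => (Φ k).mapMatrix) l where
  exists_nnnorm_le := by
    obtain ⟨C, hC⟩ := h.exists_nnnorm_le
    refine ⟨C, fun k M => ?_⟩
    simp only [Matrix.linfty_opNNNorm_def, NNReal.mul_finset_sup, Finset.mul_sum]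
    exact Finset.sup_mono_fun fun i _ => Finset.sum_le_sum fun j _ => hC k (M i j)
  tendsto_map M := tendsto_matrix_nhds_iff.2 fun i j => h.tendsto_map (M i j)
  tendsto_mul M N := by
    refine tendsto_matrix_nhds_iff.2 fun i j => ?_
    simpa [Matrix.mul_apply] using
      tendsto_finsetSum Finset.univ fun k _ => h.tendsto_mul (M i k) (N k j)
  tendsto_star M := tendsto_matrix_nhds_iff.2 fun i j => h.tendsto_star (M j i)

end NonUnitalSeminormedRing

open scoped Matrix.Norms.Operator in
lemma radiusOfComparison_le {κ A B : Type*} [CStarAlgebra A] [CStarAlgebra B] {φ : A →⋆ₐ[ℂ] B}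
    {Φ : κ → B →+ A} {l : Filter κ} [l.NeBot] (h : IsAsymptoticRetraction φ Φ l) :
    radiusOfComparison A ≤ radiusOfComparison B :=
  radiusOfComparison_le_of_cuntzSub_of_cuntzSub_map φ fun n _ _ => (h.mapMatrix (Fin n)).cuntzSub

end IsAsymptoticRetraction

end AsymptoticRetraction

section UnitaryNets

variable {κ A : Type*} [CStarAlgebra A] {l : Filter κ}

lemma tendsto_mul_coe_unitary_zero {f : κ → A} (hf : Tendsto f l (𝓝 0)) (u : κ → unitary A) :
    Tendsto (fun k => f k * (u k : A)) l (𝓝 0) := by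
  rw [tendsto_zero_iff_norm_tendsto_zero] at hf ⊢
  simpa only [CStarRing.norm_mul_coe_unitary] using hf

lemma tendsto_mul_coe_unitary_sub_coe_unitary_mul {u : κ → unitary A} {a b : A}
    (h : Tendsto (fun k => (u k : A) * a * star (u k : A)) l (𝓝 b)) :
    Tendsto (fun k => b * (u k : A) - (u k : A) * a) l (𝓝 0) := by
  have hsub : Tendsto (fun k => b - (u k : A) * a * star (u k : A)) l (𝓝 0) := by
    simpa using h.const_sub b
  simpa [sub_mul, mul_assoc] using tendsto_mul_coe_unitary_zero hsub u

lemma StrictlyApproxInner.exists_tendsto {G : Type*} [Group G] {α : G → A → A}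
    (hα : StrictlyApproxInner α) : ∃ z : Finset A × ℕ → G →* unitary A, ∀ g a,
      Tendsto (fun k => (z k g : A) * a * star (z k g : A)) atTop (𝓝 (α g a)) := by
  choose z hz using fun k : Finset A × ℕ =>
    hα k.1 (1 / ((k.2 : ℝ) + 1)) Nat.one_div_pos_of_nat
  refine ⟨z, fun g a => tendsto_iff_norm_sub_tendsto_zero.2 ?_⟩
  have hlim : Tendsto (fun k : Finset A × ℕ => 1 / ((k.2 : ℝ) + 1)) atTop (𝓝 0) := by
    rw [← prod_atTop_atTop_eq]
    exact tendsto_one_div_add_atTop_nhds_zero_nat.comp tendsto_snd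
  refine squeeze_zero' (.of_forall fun _ => norm_nonneg _) ?_ hlim
  filter_upwards [eventually_ge_atTop ({a}, 0)] with k hk
  rw [norm_sub_rev]
  exact (hz k g a (hk.1 (Finset.mem_singleton_self a))).le

end UnitaryNets

namespace CrossedProduct

variable {G A B : Type*} [Group G] [Fintype G] [CStarAlgebra A] [CStarAlgebra B] {α : G → A → A}

lemma star_u_mul_u (cp : CrossedProduct G A B α) (g : G) : star (cp.u g) * cp.u g = 1 := by
  rw [cp.u_star, cp.u_mul, inv_mul_cancel, cp.u_one]

lemma u_mul_ι (cp : CrossedProduct G A B α) (g : G) (a : A) :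
    cp.u g * cp.ι a = cp.ι (α g a) * cp.u g := by
  rw [← cp.covariant, mul_assoc, star_u_mul_u, mul_one]

lemma monomial_mul (cp : CrossedProduct G A B α) (a b : A) (g h : G) :
    cp.ι a * cp.u g * (cp.ι b * cp.u h) = cp.ι (a * α g b) * cp.u (g * h) := by
  rw [mul_assoc, ← mul_assoc (cp.u g), u_mul_ι, mul_assoc, cp.u_mul, map_mul, mul_assoc]

lemma star_monomial (cp : CrossedProduct G A B α) (a : A) (g : G) :
    star (cp.ι a * cp.u g) = cp.ι (α g⁻¹ (star a)) * cp.u g⁻¹ := by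
  rw [star_mul, cp.u_star, ← map_star, u_mul_ι]

/-- The identification of `C*(G, A, α)` with the space of coefficient families `f : G → A`, under
which `f` corresponds to `∑ f_g u_g`. -/
noncomputable def coeffEquiv (cp : CrossedProduct G A B α) : (G → A) ≃+ B :=
  AddEquiv.ofBijective
    (AddMonoidHom.mk' (fun f => ∑ g, cp.ι (f g) * cp.u g) fun f h => by
      simp [add_mul, Finset.sum_add_distrib]) <| by
    refine ⟨(injective_iff_map_eq_zero _).2 fun f hf => funext fun g => ?_, fun b => ?_⟩
    · have hfg := cp.coeff_norm_le f g
      rwa [show ∑ h, cp.ι (f h) * cp.u h = 0 from hf, norm_zero, norm_le_zero_iff] at hfg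
    · obtain ⟨f, hf⟩ := cp.spans b
      exact ⟨f, hf.symm⟩

/-- The substitution `∑ f_g u_g ↦ ∑ f_g z_g` of elements `z_g` of `A` for the canonical
unitaries. -/
noncomputable def substitute (cp : CrossedProduct G A B α) (z : G → A) : B →+ A :=
  (∑ g, (AddMonoidHom.mulRight (z g)).comp (Pi.evalAddMonoidHom (fun _ => A) g)).comp
    cp.coeffEquiv.symm.toAddMonoidHom

lemma substitute_sum (cp : CrossedProduct G A B α) (z f : G → A) :
    cp.substitute z (∑ g, cp.ι (f g) * cp.u g) = ∑ g, f g * z g := by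
  have hf : cp.coeffEquiv.symm (∑ g, cp.ι (f g) * cp.u g) = f := cp.coeffEquiv.symm_apply_apply f
  simp [substitute, hf, -map_sum]

lemma substitute_monomial (cp : CrossedProduct G A B α) (z : G → A) (a : A) (g : G) :
    cp.substitute z (cp.ι a * cp.u g) = a * z g := by
  classical
  simpa [Pi.single_apply, apply_ite cp.ι, ite_mul] using cp.substitute_sum z (Pi.single g a)

lemma substitute_ι (cp : CrossedProduct G A B α) {z : G → A} (hz : z 1 = 1) (a : A) :
    cp.substitute z (cp.ι a) = a := by
  simpa [cp.u_one, hz] using cp.substitute_monomial z a 1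

lemma nnnorm_substitute_unitary_le (cp : CrossedProduct G A B α) (z : G → unitary A) (x : B) :
    ‖cp.substitute (fun g => z g) x‖₊ ≤ Fintype.card G * ‖x‖₊ := by
  obtain ⟨f, rfl⟩ := cp.spans x
  rw [substitute_sum, ← nsmul_eq_mul]
  refine nnnorm_sum_le_of_le _ (fun g _ => ?_) |>.trans_eq (Finset.sum_const _)
  exact (CStarRing.norm_mul_coe_unitary (f g) (z g)).trans_le (cp.coeff_norm_le f g)

section Asymptotics

variable {κ : Type*} {l : Filter κ} {z : κ → G →* unitary A}

lemma tendsto_substitute_mul (cp : CrossedProduct G A B α)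
    (hz : ∀ g a, Tendsto (fun k => (z k g : A) * a * star (z k g : A)) l (𝓝 (α g a))) (x y : B) :
    Tendsto (fun k => cp.substitute (fun g => z k g) (x * y) -
      cp.substitute (fun g => z k g) x * cp.substitute (fun g => z k g) y) l (𝓝 0) := by
  have monomial (a b : A) (g h : G) :
      Tendsto (fun k => a * α g b * (z k (g * h) : A) - a * (z k g : A) * (b * (z k h : A))) l
        (𝓝 0) := by
    have hlim := (tendsto_mul_coe_unitary_sub_coe_unitary_mul (hz g b)).const_mul a
    rw [mul_zero] at hlim
    simpa [mul_sub, sub_mul, mul_assoc] using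
      tendsto_mul_coe_unitary_zero hlim fun k => z k h
  obtain ⟨f, rfl⟩ := cp.spans x
  obtain ⟨f', rfl⟩ := cp.spans y
  have hsum := tendsto_finsetSum Finset.univ fun g _ =>
    tendsto_finsetSum Finset.univ fun h _ => monomial (f g) (f' h) g h
  simpa only [Finset.sum_mul_sum, monomial_mul, map_sum, substitute_monomial,
    Finset.sum_sub_distrib, Finset.sum_const_zero] using hsum

lemma tendsto_substitute_star (cp : CrossedProduct G A B α)
    (hz : ∀ g a, Tendsto (fun k => (z k g : A) * a * star (z k g : A)) l (𝓝 (α g a))) (x : B) :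
    Tendsto (fun k => cp.substitute (fun g => z k g) (star x) -
      star (cp.substitute (fun g => z k g) x)) l (𝓝 0) := by
  have monomial (a : A) (g : G) :
      Tendsto (fun k => α g⁻¹ (star a) * (z k g⁻¹ : A) - star (a * (z k g : A))) l (𝓝 0) := by
    simpa [← Unitary.star_eq_inv] using
      tendsto_mul_coe_unitary_sub_coe_unitary_mul (hz g⁻¹ (star a))
  obtain ⟨f, rfl⟩ := cp.spans x
  have hsum := tendsto_finsetSum Finset.univ fun g _ => monomial (f g) g
  simpa only [star_sum, star_monomial, map_sum, substitute_monomial, Finset.sum_sub_distrib,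
    Finset.sum_const_zero] using hsum

lemma isAsymptoticRetraction_substitute (cp : CrossedProduct G A B α)
    (hz : ∀ g a, Tendsto (fun k => (z k g : A) * a * star (z k g : A)) l (𝓝 (α g a))) :
    IsAsymptoticRetraction cp.ι (fun k => cp.substitute fun g => z k g) l where
  exists_nnnorm_le := ⟨Fintype.card G, fun k => cp.nnnorm_substitute_unitary_le (z k)⟩
  tendsto_map a := tendsto_const_nhds.congr fun k => (cp.substitute_ι (by simp) a).symm
  tendsto_mul := cp.tendsto_substitute_mul hz
  tendsto_star := cp.tendsto_substitute_star hz

end Asymptotics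

end CrossedProduct

theorem radiusOfComparison_le_crossedProduct_general
    {G A B : Type*} [Group G] [Fintype G] [CStarAlgebra A] [CStarAlgebra B] {α : G → A → A}
    (cp : CrossedProduct G A B α) (hα : StrictlyApproxInner α) :
    radiusOfComparison A ≤ radiusOfComparison B := by
  classical
  obtain ⟨z, hz⟩ := hα.exists_tendsto
  exact (cp.isAsymptoticRetraction_substitute hz).radiusOfComparison_le

/-- Let `A` be a stably finite unital C*-algebra, `G` a finite group, and
`α : G → Aut(A)` strictly approximately inner.  Then
`rc(A) ≤ rc(C*(G, A, α))`. -/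
theorem radiusOfComparison_le_crossedProduct
    {G : Type*} [Group G] [Fintype G] {A B : Type*} [CStarAlgebra A] [CStarAlgebra B]
    (α : G → (A ≃⋆ₐ[ℂ] A))
    (hα : ∀ (g h : G) (a : A), α (g * h) a = α g (α h a))
    (cp : CrossedProduct G A B (fun g a => α g a))
    (hsai : StrictlyApproxInner (fun g a => α g a))
    (hsf : StablyFinite A) :
    radiusOfComparison A ≤ radiusOfComparison B := by
  exact radiusOfComparison_le_crossedProduct_general cp hsai
end

section
/- Let $A$ be a unital C*-algebra, let $G$ be a finite group, and let $\alpha: G \to \mathrm{Aut}(A)$ be an action such that for every finite set $F \subset A$ and every $\varepsilon > 0$ there are unitaries $z_g \in U(A)$ ($g \in G$) with $\|\alpha_g(a) - z_g a z_g^*\| < \varepsilon$ for all $g \in G, a \in F$, and $\|z_g z_h - z_{gh}\| < \varepsilon$ for all $g, h \in G$. Then for every finite set $F \subset A$ and every $\varepsilon > 0$ there is an exact group homomorphism $g \mapsto w_g$ from $G$ to $U(A)$ such that $\|\alpha_g(a) - w_g a w_g^*\| < \varepsilon$ for all $g \in G$ and $a \in F$. -/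
/-!
An almost multiplicative map `ρ : G → A` from a finite group to a Banach algebra is corrected by
Newton's method. Its multiplicativity defect `D g h = ρ (g * h) - ρ g * ρ h` is a 2-cocycle, except
that `ρ` is not quite a representation, and averaging over `G` splits cocycles: adding to `ρ g` the
mean over `h` of `D g h * ρ h⁻¹` replaces the defect by a quadratic expression in it. The iterates
converge to a homomorphism `σ` close to `ρ`. When `A` is a C⋆-algebra and `ρ` takes unitary values,
Weyl's unitary trick conjugates `σ` by the square root of the mean of `star (σ h) * σ h`, which is
close to `1`, and the result is a homomorphism into the unitary group.
-/

namespace ApproxHom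

open Filter Finset Topology

section Average

variable {ι E A : Type*} [Fintype ι] [AddCommMonoid E] [Module ℝ E] [Semiring A] [Algebra ℝ A]

/-- The arithmetic mean of a family indexed by a finite type, as a linear map. It stands in for
`Finset.expect`, which would require a `ℚ≥0`-module structure on the Banach algebra. -/
noncomputable def average : (ι → E) →ₗ[ℝ] E :=
  (Fintype.card ι : ℝ)⁻¹ • ∑ i, LinearMap.proj i

lemma average_apply (f : ι → E) : average f = (Fintype.card ι : ℝ)⁻¹ • ∑ i, f i := by
  simp [average]

lemma average_const [Nonempty ι] (x : E) : average (fun _ : ι => x) = x := by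
  have hcard : (Fintype.card ι : ℝ) ≠ 0 := Nat.cast_ne_zero.2 Fintype.card_ne_zero
  rw [average_apply, sum_const, card_univ, ← Nat.cast_smul_eq_nsmul ℝ, inv_smul_smul₀ hcard]

lemma average_comp_equiv (e : ι ≃ ι) (f : ι → E) : average (fun i => f (e i)) = average f := by
  rw [average_apply, average_apply, e.sum_comp f]

lemma mul_average (a : A) (f : ι → A) : a * average f = average fun i => a * f i := by
  rw [average_apply, average_apply, mul_smul_comm, mul_sum]

lemma average_mul (f : ι → A) (a : A) : average f * a = average fun i => f i * a := by
  rw [average_apply, average_apply, smul_mul_assoc, sum_mul]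

lemma norm_average_le {E : Type*} [SeminormedAddCommGroup E] [NormedSpace ℝ E] [Nonempty ι]
    {f : ι → E} {C : ℝ} (hf : ∀ i, ‖f i‖ ≤ C) : ‖average f‖ ≤ C := by
  rw [average_apply, norm_smul, norm_inv, Real.norm_natCast,
    inv_mul_le_iff₀ (Nat.cast_pos.2 Fintype.card_pos)]
  simpa using norm_sum_le_of_le univ fun i _ => hf i

end Average

section Newton

/-- The failure of `ρ` to be multiplicative at the pair `(g, h)`. -/
def mulDefect {G A : Type*} [Mul G] [Ring A] (ρ : G → A) (g h : G) : A := ρ (g * h) - ρ g * ρ h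

lemma mulDefect_cocycle {G A : Type*} [Semigroup G] [Ring A] (ρ : G → A) (a b c : G) :
    ρ a * mulDefect ρ b c - mulDefect ρ (a * b) c + mulDefect ρ a (b * c)
      - mulDefect ρ a b * ρ c = 0 := by
  simp only [mulDefect, mul_assoc]
  noncomm_ring

section Algebraic

variable {G A : Type*} [Group G] [Fintype G] [Ring A] [Algebra ℝ A]

/-- The first-order correction that makes `ρ` multiplicative up to second order: it splits the
defect, regarded as a cocycle on `G`, by averaging over the group. -/
noncomputable def newtonCorrection (ρ : G → A) (g : G) : A :=
  average fun h => mulDefect ρ g h * ρ h⁻¹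

/-- One step of Newton's method for the equation `ρ (g * h) = ρ g * ρ h`. -/
noncomputable def newtonStep (ρ : G → A) : G → A := ρ + newtonCorrection ρ

lemma newtonStep_one {ρ : G → A} (hρ : ρ 1 = 1) : newtonStep ρ 1 = 1 := by
  have hcorr : newtonCorrection ρ 1 = average (0 : G → A) := by
    simp [newtonCorrection, mulDefect, hρ, Pi.zero_def]
  simp [newtonStep, hcorr, hρ]

lemma average_mulDefect_mul_left (ρ : G → A) (a b : G) :
    average (fun h => mulDefect ρ a (b * h) * ρ h⁻¹)
      = newtonCorrection ρ a * ρ b + average fun h => mulDefect ρ a h * mulDefect ρ h⁻¹ b := by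
  calc average (fun h => mulDefect ρ a (b * h) * ρ h⁻¹)
      = average fun h => mulDefect ρ a h * ρ (h⁻¹ * b) := by
        rw [← average_comp_equiv (Equiv.mulLeft b) fun h => mulDefect ρ a h * ρ (h⁻¹ * b)]
        simp
    _ = average ((fun h => mulDefect ρ a h * ρ h⁻¹ * ρ b)
          + fun h => mulDefect ρ a h * mulDefect ρ h⁻¹ b) := by
        congr 1 with h
        simp only [Pi.add_apply, mulDefect]
        noncomm_ring
    _ = _ := by rw [map_add, newtonCorrection, average_mul]

lemma average_mulDefect_mul_mul_inv {ρ : G → A} (hρ : ρ 1 = 1) (a b : G) :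
    average (fun h => mulDefect ρ a b * ρ h * ρ h⁻¹)
      = mulDefect ρ a b - average fun h => mulDefect ρ a b * mulDefect ρ h h⁻¹ := by
  rw [eq_sub_iff_add_eq, ← map_add, ← average_const (ι := G) (mulDefect ρ a b)]
  congr 1 with h
  rw [average_const, Pi.add_apply, mul_assoc, ← mul_add, mulDefect.eq_1 ρ h h⁻¹,
    mul_inv_cancel, hρ, add_sub_cancel, mul_one]

/-- The correction solves the linearised equation, up to terms quadratic in the defect. -/
lemma newtonCorrection_mul {ρ : G → A} (hρ : ρ 1 = 1) (a b : G) :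
    newtonCorrection ρ (a * b)
      = ρ a * newtonCorrection ρ b + newtonCorrection ρ a * ρ b - mulDefect ρ a b
        + average fun h => mulDefect ρ a b * mulDefect ρ h h⁻¹
            + mulDefect ρ a h * mulDefect ρ h⁻¹ b := by
  have hsplit : newtonCorrection ρ (a * b) = ρ a * newtonCorrection ρ b
      + average (fun h => mulDefect ρ a (b * h) * ρ h⁻¹)
      - average (fun h => mulDefect ρ a b * ρ h * ρ h⁻¹) := by
    rw [newtonCorrection, newtonCorrection, mul_average, ← map_add, ← map_sub]
    congr 1 with h
    have hcocycle := congrArg (· * ρ h⁻¹) (mulDefect_cocycle ρ a b h)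
    simp only [sub_mul, add_mul, zero_mul, mul_assoc] at hcocycle
    simp only [Pi.add_apply, Pi.sub_apply, mul_assoc]
    rw [← sub_eq_zero, ← neg_eq_zero, ← hcocycle]
    abel
  rw [hsplit, average_mulDefect_mul_left, average_mulDefect_mul_mul_inv hρ, ← Pi.add_def, map_add]
  abel

lemma mulDefect_newtonStep {ρ : G → A} (hρ : ρ 1 = 1) (a b : G) :
    mulDefect (newtonStep ρ) a b
      = average (fun h => mulDefect ρ a b * mulDefect ρ h h⁻¹
          + mulDefect ρ a h * mulDefect ρ h⁻¹ b)
        - newtonCorrection ρ a * newtonCorrection ρ b := by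
  rw [mulDefect, newtonStep, Pi.add_apply, Pi.add_apply, Pi.add_apply, newtonCorrection_mul hρ]
  have hdefect : ρ (a * b) = mulDefect ρ a b + ρ a * ρ b := (sub_add_cancel _ _).symm
  rw [hdefect, add_mul, mul_add, mul_add]
  abel

end Algebraic

section Normed

/-- `ρ` is unital and multiplicative up to an error of norm at most `δ`. -/
structure IsAlmostHom {G A : Type*} [MulOneClass G] [NormedRing A] (ρ : G → A) (δ : ℝ) : Prop where
  map_one : ρ 1 = 1
  norm_mulDefect_le : ∀ g h, ‖mulDefect ρ g h‖ ≤ δ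

lemma IsAlmostHom.nonneg {G A : Type*} [MulOneClass G] [NormedRing A] {ρ : G → A} {δ : ℝ}
    (hρ : IsAlmostHom ρ δ) : 0 ≤ δ :=
  (norm_nonneg _).trans (hρ.norm_mulDefect_le 1 1)

variable {G A : Type*} [Group G] [NormedRing A] [NormedAlgebra ℝ A] {ρ : G → A} {δ K : ℝ}

section Fintype

variable [Fintype G]

lemma IsAlmostHom.norm_newtonCorrection_le (hρ : IsAlmostHom ρ δ) (hK : ∀ g, ‖ρ g‖ ≤ K) (g : G) :
    ‖newtonCorrection ρ g‖ ≤ δ * K :=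
  norm_average_le fun h => norm_mul_le_of_le (hρ.norm_mulDefect_le g h) (hK h⁻¹)

lemma norm_mulDefect_newtonStep_le (hρ : IsAlmostHom ρ δ) (hK : ∀ g, ‖ρ g‖ ≤ K) (a b : G) :
    ‖mulDefect (newtonStep ρ) a b‖ ≤ (2 + K ^ 2) * δ ^ 2 := by
  rw [mulDefect_newtonStep hρ.map_one]
  calc _ ≤ (δ * δ + δ * δ) + δ * K * (δ * K) := by
        refine norm_sub_le_of_le (norm_average_le fun h => ?_) (norm_mul_le_of_le
          (hρ.norm_newtonCorrection_le hK a) (hρ.norm_newtonCorrection_le hK b))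
        exact norm_add_le_of_le
          (norm_mul_le_of_le (hρ.norm_mulDefect_le a b) (hρ.norm_mulDefect_le h h⁻¹))
          (norm_mul_le_of_le (hρ.norm_mulDefect_le a h) (hρ.norm_mulDefect_le h⁻¹ b))
    _ = (2 + K ^ 2) * δ ^ 2 := by ring

lemma isAlmostHom_newtonStep_half (hρ : IsAlmostHom ρ δ) (hK : ∀ g, ‖ρ g‖ ≤ K)
    (hδ : 2 * (2 + K ^ 2) * δ ≤ 1) : IsAlmostHom (newtonStep ρ) (δ / 2) where
  map_one := newtonStep_one hρ.map_one
  norm_mulDefect_le a b := by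
    refine (norm_mulDefect_newtonStep_le hρ hK a b).trans ?_
    nlinarith [hρ.nonneg]

lemma isAlmostHom_newtonStep_iterate (hρ : IsAlmostHom ρ δ) (hK : ∀ g, ‖ρ g‖ + 1 ≤ K)
    (hδ : 2 * (2 + K ^ 2) * δ ≤ 1) (k : ℕ) :
    IsAlmostHom (newtonStep^[k] ρ) (δ / 2 ^ k) ∧ ∀ g, ‖(newtonStep^[k] ρ) g‖ ≤ K := by
  have hδ₀ := hρ.nonneg
  have hK₀ : 0 ≤ K := by linarith [hK 1, norm_nonneg (ρ 1)]
  have hdrift : 2 * K * δ ≤ 1 := by nlinarith [sq_nonneg (K - 1)]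
  have hle (k : ℕ) : K - 1 + 2 * K * δ - 2 * K * δ / 2 ^ k ≤ K := by
    linarith [show 0 ≤ 2 * K * δ / 2 ^ k by positivity]
  suffices hiter : IsAlmostHom (newtonStep^[k] ρ) (δ / 2 ^ k) ∧
      ∀ g, ‖(newtonStep^[k] ρ) g‖ ≤ K - 1 + 2 * K * δ - 2 * K * δ / 2 ^ k from
    ⟨hiter.1, fun g => (hiter.2 g).trans (hle k)⟩
  -- The norm bound adds up the corrections, of size at most `K * δ / 2 ^ k` at step `k`.
  induction k with
  | zero => simpa [le_sub_iff_add_le] using ⟨hρ, hK⟩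
  | succ k ih =>
    obtain ⟨hhom, hnorm⟩ := ih
    have hnormK (g : G) : ‖(newtonStep^[k] ρ) g‖ ≤ K := (hnorm g).trans (hle k)
    have hδk : δ / 2 ^ k ≤ δ := div_le_self hδ₀ (one_le_pow₀ one_le_two)
    rw [Function.iterate_succ_apply']
    refine ⟨?_, fun g => ?_⟩
    · rw [pow_succ, ← div_div]
      exact isAlmostHom_newtonStep_half hhom hnormK (hδ.trans' (by gcongr))
    · calc ‖newtonStep (newtonStep^[k] ρ) g‖
          ≤ (K - 1 + 2 * K * δ - 2 * K * δ / 2 ^ k) + δ / 2 ^ k * K :=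
            norm_add_le_of_le (hnorm g) (hhom.norm_newtonCorrection_le hnormK g)
        _ = K - 1 + 2 * K * δ - 2 * K * δ / 2 ^ (k + 1) := by field_simp; ring

end Fintype

theorem IsAlmostHom.exists_monoidHom_norm_sub_le [CompleteSpace A] [Finite G]
    (hρ : IsAlmostHom ρ δ) (hK : ∀ g, ‖ρ g‖ + 1 ≤ K) (hδ : 2 * (2 + K ^ 2) * δ ≤ 1) :
    ∃ σ : G →* A, ∀ g, ‖σ g - ρ g‖ ≤ 2 * K * δ := by
  cases nonempty_fintype G
  have hiter := isAlmostHom_newtonStep_iterate hρ hK hδ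
  have hdist (g : G) (k : ℕ) :
      dist ((newtonStep^[k] ρ) g) ((newtonStep^[k + 1] ρ) g) ≤ 2 * K * δ / 2 / 2 ^ k := by
    rw [Function.iterate_succ_apply', dist_comm, dist_eq_norm, newtonStep, Pi.add_apply,
      add_sub_cancel_left]
    refine ((hiter k).1.norm_newtonCorrection_le (hiter k).2 g).trans_eq ?_
    ring
  choose σ hσ using fun g =>
    cauchySeq_tendsto_of_complete (cauchySeq_of_le_geometric_two (hdist g))
  have hone : σ 1 = 1 := tendsto_nhds_unique (hσ 1) <| by simp [(hiter _).1.map_one]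
  have hmul (g h : G) : σ (g * h) = σ g * σ h := by
    have hdefect : Tendsto (fun k => mulDefect (newtonStep^[k] ρ) g h) atTop (𝓝 0) :=
      squeeze_zero_norm (fun k => (hiter k).1.norm_mulDefect_le g h)
        (tendsto_const_nhds.div_atTop (tendsto_pow_atTop_atTop_of_one_lt one_lt_two))
    exact sub_eq_zero.1 (tendsto_nhds_unique ((hσ (g * h)).sub ((hσ g).mul (hσ h))) hdefect)
  refine ⟨⟨⟨σ, hone⟩, hmul⟩, fun g => ?_⟩
  rw [← dist_eq_norm, dist_comm]
  exact dist_le_of_le_geometric_two_of_tendsto₀ (hdist g) (hσ g)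

end Normed

end Newton

section UnitaryTrick

/-- The mean of `star (σ h) * σ h`. For a homomorphism `σ` it is the Gram operator of a
`σ`-invariant `A`-valued inner product on `A`, used in Weyl's unitary trick. -/
noncomputable def gram {G A : Type*} [Fintype G] [Ring A] [Star A] [Algebra ℝ A] (σ : G → A) : A :=
  average fun h => star (σ h) * σ h

lemma star_mul_gram_mul {G A : Type*} [Group G] [Fintype G] [Ring A] [StarRing A] [Algebra ℝ A]
    (σ : G →* A) (g : G) : star (σ g) * gram σ * σ g = gram σ := by
  calc star (σ g) * gram σ * σ g
      = average fun h => star (σ (h * g)) * σ (h * g) := by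
        simp only [gram, mul_average, average_mul, map_mul, star_mul, mul_assoc]
    _ = gram σ := average_comp_equiv (Equiv.mulRight g) fun h => star (σ h) * σ h

lemma norm_coe_unitary_le_one {A : Type*} [NormedRing A] [StarRing A] [CStarRing A]
    (u : unitary A) : ‖(u : A)‖ ≤ 1 := by
  cases subsingleton_or_nontrivial A
  · simp [Subsingleton.elim (u : A) 0]
  · exact (CStarRing.norm_coe_unitary u).le

lemma norm_star_mul_self_sub_one_le {A : Type*} [NormedRing A] [StarRing A] [CStarRing A]
    (x : A) (u : unitary A) : ‖star x * x - 1‖ ≤ ‖x - u‖ * (‖x‖ + 1) := by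
  calc ‖star x * x - 1‖ = ‖star (x - u) * x + star (u : A) * (x - u)‖ := by
        rw [star_sub, sub_mul, mul_sub, Unitary.coe_star_mul_self, sub_add_sub_cancel]
    _ ≤ ‖x - u‖ * ‖x‖ + 1 * ‖x - u‖ := by
        refine norm_add_le_of_le (norm_mul_le_of_le (norm_star _).le le_rfl)
          (norm_mul_le_of_le ?_ le_rfl)
        exact (norm_star _).trans_le (norm_coe_unitary_le_one u)
    _ = ‖x - u‖ * (‖x‖ + 1) := by ring

variable {G A : Type*} [CStarAlgebra A]

lemma norm_gram_sub_one_le [Fintype G] [Nonempty G] {σ : G → A} {C : ℝ}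
    (hσ : ∀ g, ‖star (σ g) * σ g - 1‖ ≤ C) : ‖gram σ - 1‖ ≤ C := by
  rw [gram, ← average_const (ι := G) (1 : A), ← map_sub]
  exact norm_average_le hσ

section Order

variable [PartialOrder A] [StarOrderedRing A]

lemma norm_sub_one_le_norm_mul_self_sub_one {b : A} (hb : 0 ≤ b) : ‖b - 1‖ ≤ ‖b * b - 1‖ := by
  have hsub : cfc (fun x : ℝ => x - 1) b = b - 1 := by
    rw [cfc_sub .., cfc_id' ℝ b, cfc_const_one ℝ b]
  have hsq : cfc (fun x : ℝ => x * x - 1) b = b * b - 1 := by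
    rw [cfc_sub .., cfc_mul .., cfc_id' ℝ b, cfc_const_one ℝ b]
  rw [← hsub, ← hsq]
  refine norm_cfc_le (norm_nonneg _) fun x hx => ?_
  have hx₀ : 0 ≤ x := spectrum_nonneg_of_nonneg hb hx
  calc ‖x - 1‖ ≤ ‖x - 1‖ * ‖x + 1‖ :=
        le_mul_of_one_le_right (norm_nonneg _) (by rw [Real.norm_of_nonneg] <;> linarith)
    _ = ‖x * x - 1‖ := by rw [← norm_mul]; ring_nf
    _ ≤ _ := norm_apply_le_norm_cfc (fun x : ℝ => x * x - 1) b hx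

variable [Group G] [Fintype G]

lemma isStrictlyPositive_gram (σ : G →* A) : IsStrictlyPositive (gram σ) := by
  have hone : 1 ≤ ∑ h, star (σ h) * σ h := by
    simpa using single_le_sum (f := fun h => star (σ h) * σ h)
      (fun h _ => star_mul_self_nonneg (σ h)) (mem_univ 1)
  rw [gram, average_apply]
  refine IsStrictlyPositive.smul (by simp [Fintype.card_pos]) ?_
  exact isStrictlyPositive_one.of_le hone

theorem exists_unitary_intertwining_sqrt_gram (σ : G →* A) :
    ∃ w : G →* unitary A, ∀ g, w g * CFC.sqrt (gram σ) = CFC.sqrt (gram σ) * σ g := by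
  have hpos := isStrictlyPositive_gram σ
  obtain ⟨T, hT⟩ := hpos.isUnit_cfcSqrt
  have hTT : star (T : A) * T = gram σ := by
    rw [hT, (CFC.sqrt_nonneg _).isSelfAdjoint.star_eq, CFC.sqrt_mul_sqrt_self _ hpos.nonneg]
  let v : G →* A := (Units.coeHom A).comp ((MulAut.conj T).toMonoidHom.comp σ.toHomUnits)
  have hv (g : G) : v g ∈ unitary A := by
    refine (Units.mul_inv_mem_unitary (T * σ.toHomUnits g) T).2 (Units.ext ?_)
    calc star (T * σ g) * (T * σ g) = star (σ g) * (star (T : A) * T) * σ g := by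
          simp only [star_mul, mul_assoc]
      _ = star (T : A) * T := by rw [hTT, star_mul_gram_mul]
  refine ⟨v.codRestrict (unitary A) hv, fun g => ?_⟩
  rw [← hT]
  simp [v]

end Order

theorem exists_unitary_hom_norm_sub_le [Group G] [Finite G] (σ : G →* A) {ε : ℝ}
    (hσ : ∀ g, ∃ u : unitary A, ‖σ g - u‖ ≤ ε) :
    ∃ w : G →* unitary A, ∀ g, ‖(w g : A) - σ g‖ ≤ ε * (2 + ε) ^ 2 := by
  cases nonempty_fintype G
  let _ := CStarAlgebra.spectralOrder A
  let _ := CStarAlgebra.spectralOrderedRing A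
  have hε : 0 ≤ ε := (norm_nonneg _).trans (hσ 1).choose_spec
  have hnorm (g : G) : ‖σ g‖ ≤ 1 + ε := by
    obtain ⟨u, hu⟩ := hσ g
    linarith [norm_le_norm_add_norm_sub' (σ g) (u : A), norm_coe_unitary_le_one u]
  obtain ⟨w, hw⟩ := exists_unitary_intertwining_sqrt_gram σ
  set T := CFC.sqrt (gram σ)
  have hT : ‖T - 1‖ ≤ ε * (2 + ε) := by
    calc ‖T - 1‖ ≤ ‖gram σ - 1‖ := by
          simpa [T, CFC.sqrt_mul_sqrt_self _ (isStrictlyPositive_gram σ).nonneg] using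
            norm_sub_one_le_norm_mul_self_sub_one (CFC.sqrt_nonneg (gram σ))
      _ ≤ ε * (2 + ε) := norm_gram_sub_one_le fun g => by
          obtain ⟨u, hu⟩ := hσ g
          refine (norm_star_mul_self_sub_one_le (σ g) u).trans ?_
          exact mul_le_mul hu (by linarith [hnorm g]) (by positivity) hε
  refine ⟨w, fun g => ?_⟩
  calc ‖(w g : A) - σ g‖ = ‖(T - 1) * σ g - w g * (T - 1)‖ := by
        rw [sub_mul, mul_sub, hw]; congr 1; noncomm_ring
    _ ≤ ε * (2 + ε) * (1 + ε) + ε * (2 + ε) := by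
        refine norm_sub_le_of_le (norm_mul_le_of_le hT (hnorm g)) ?_
        rwa [CStarRing.norm_coe_unitary_mul]
    _ = ε * (2 + ε) ^ 2 := by ring

end UnitaryTrick

section Stability

section CStarRing

variable {A : Type*} [NormedRing A] [StarRing A] [CStarRing A]

lemma norm_coe_inv_sub_one (u : unitary A) : ‖(↑u⁻¹ : A) - 1‖ = ‖(u : A) - 1‖ := by
  rw [← norm_star, star_sub, star_one, ← Unitary.coe_star, Unitary.star_eq_inv, inv_inv]

lemma norm_conj_sub_conj_le (u v : unitary A) (a : A) :
    ‖(u : A) * a * star (u : A) - v * a * star (v : A)‖ ≤ 2 * ‖a‖ * ‖(u : A) - v‖ := by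
  calc ‖(u : A) * a * star (u : A) - v * a * star (v : A)‖
      = ‖((u : A) - v) * a * star (u : A) + v * (a * star ((u : A) - v))‖ := by
        rw [star_sub]; noncomm_ring
    _ ≤ ‖(u : A) - v‖ * ‖a‖ + ‖a‖ * ‖(u : A) - v‖ := by
        refine norm_add_le_of_le ?_ ?_
        · rw [← Unitary.coe_star, CStarRing.norm_mul_coe_unitary]
          exact norm_mul_le _ _
        · rw [CStarRing.norm_coe_unitary_mul]
          exact norm_mul_le_of_le le_rfl (norm_star _).le
    _ = 2 * ‖a‖ * ‖(u : A) - v‖ := by ring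

variable {G : Type*} [MulOneClass G] {z : G → unitary A} {δ : ℝ}

lemma norm_map_one_sub_one_le (hz : ∀ g h, ‖(z g : A) * z h - z (g * h)‖ ≤ δ) :
    ‖(z 1 : A) - 1‖ ≤ δ := by
  calc ‖(z 1 : A) - 1‖ = ‖(z 1 : A) * z 1 - z (1 * 1)‖ := by
        rw [← CStarRing.norm_coe_unitary_mul (z 1), mul_sub, mul_one, mul_one]
    _ ≤ δ := hz 1 1

lemma isAlmostHom_inv_map_one_mul (hz : ∀ g h, ‖(z g : A) * z h - z (g * h)‖ ≤ δ) :
    IsAlmostHom (fun g => (↑(z 1)⁻¹ * z g : A)) (2 * δ) where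
  map_one := by rw [← Unitary.star_eq_inv, Unitary.coe_star, Unitary.coe_star_mul_self]
  norm_mulDefect_le g h := by
    set u : unitary A := (z 1)⁻¹
    have hu : ‖(u : A) - 1‖ ≤ δ :=
      (norm_coe_inv_sub_one _).trans_le (norm_map_one_sub_one_le hz)
    calc ‖mulDefect (fun g => (u * z g : A)) g h‖
        = ‖(u : A) * ((z g * z h - z (g * h)) + z g * (((u : A) - 1) * z h))‖ := by
          rw [mulDefect, ← norm_neg]; noncomm_ring
      _ ≤ δ + δ := by
          rw [CStarRing.norm_coe_unitary_mul]
          refine norm_add_le_of_le (hz g h) ?_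
          rwa [CStarRing.norm_coe_unitary_mul, CStarRing.norm_mul_coe_unitary]
      _ = 2 * δ := (two_mul δ).symm

end CStarRing

theorem exists_unitary_hom_norm_sub_le_of_norm_mul_sub_le {G A : Type*} [Group G] [Finite G]
    [CStarAlgebra A] {z : G → unitary A} {δ : ℝ} (hδ : δ ≤ 1 / 24)
    (hz : ∀ g h, ‖(z g : A) * z h - z (g * h)‖ ≤ δ) :
    ∃ w : G →* unitary A, ∀ g, ‖(w g : A) - z g‖ ≤ 53 * δ := by
  have hone := norm_map_one_sub_one_le hz
  have hδ₀ : 0 ≤ δ := (norm_nonneg _).trans hone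
  have hnorm (g : G) : ‖(↑(z 1)⁻¹ * z g : A)‖ + 1 ≤ 2 := by
    rw [← Submonoid.coe_mul]
    linarith [norm_coe_unitary_le_one ((z 1)⁻¹ * z g)]
  obtain ⟨σ, hσ⟩ :=
    (isAlmostHom_inv_map_one_mul hz).exists_monoidHom_norm_sub_le hnorm (by linarith)
  obtain ⟨w, hw⟩ := exists_unitary_hom_norm_sub_le σ fun g => ⟨(z 1)⁻¹ * z g, hσ g⟩
  refine ⟨w, fun g => ?_⟩
  have hnormalised : ‖(↑(z 1)⁻¹ * z g : A) - z g‖ ≤ δ := by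
    rwa [← sub_one_mul, CStarRing.norm_mul_coe_unitary, norm_coe_inv_sub_one]
  calc ‖(w g : A) - z g‖
      = ‖((w g : A) - σ g) + (σ g - ↑(z 1)⁻¹ * z g) + (↑(z 1)⁻¹ * z g - z g)‖ := by
        congr 1; abel
    _ ≤ 2 * 2 * (2 * δ) * (2 + 2 * 2 * (2 * δ)) ^ 2 + 2 * 2 * (2 * δ) + δ :=
        norm_add_le_of_le (norm_add_le_of_le (hw g) (hσ g)) hnormalised
    _ ≤ 53 * δ := by nlinarith [mul_nonneg hδ₀ hδ₀]

end Stability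

end ApproxHom

open ApproxHom in
theorem approx_hom_upgrades_to_hom_general
    {G : Type*} [Group G] [Finite G] {A : Type*} [CStarAlgebra A] (α : G → A → A) {S : Set A}
    (hS : Bornology.IsBounded S)
    (happrox : ∀ ε : ℝ, 0 < ε → ∃ z : G → unitary A,
      (∀ g : G, ∀ a ∈ S, ‖α g a - (z g : A) * a * star (z g : A)‖ < ε) ∧
      ∀ g h : G, ‖(z g : A) * z h - z (g * h)‖ < ε) :
    ∀ ε : ℝ, 0 < ε → ∃ w : G →* unitary A,
      ∀ g : G, ∀ a ∈ S, ‖α g a - (w g : A) * a * star (w g : A)‖ < ε := by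
  intro ε hε
  obtain ⟨M, hM, hSM⟩ := hS.exists_pos_norm_le
  have hden : 0 < 1 + 2 * M * 53 := by positivity
  obtain ⟨δ, hδ₀, hδ⟩ := exists_between (show 0 < min (1 / 24) (ε / (1 + 2 * M * 53)) by positivity)
  obtain ⟨hδ₁, hδε⟩ := lt_min_iff.1 hδ
  obtain ⟨z, hzα, hz⟩ := happrox δ hδ₀
  obtain ⟨w, hw⟩ :=
    exists_unitary_hom_norm_sub_le_of_norm_mul_sub_le hδ₁.le fun g h => (hz g h).le
  refine ⟨w, fun g a ha => ?_⟩
  calc ‖α g a - (w g : A) * a * star (w g : A)‖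
      ≤ ‖α g a - (z g : A) * a * star (z g : A)‖
          + ‖(z g : A) * a * star (z g : A) - w g * a * star (w g : A)‖ :=
        norm_sub_le_norm_sub_add_norm_sub _ _ _
    _ ≤ δ + 2 * M * (53 * δ) := by
        refine add_le_add (hzα g a ha).le ((norm_conj_sub_conj_le _ _ _).trans ?_)
        rw [norm_sub_rev]
        gcongr
        exacts [hSM a ha, hw g]
    _ = δ * (1 + 2 * M * 53) := by ring
    _ < ε := (lt_div_iff₀ hden).1 hδε

/-- Let `A` be a unital C*-algebra, `G` a finite group, and
`α : G → Aut(A)` an action such that for every finite `F ⊆ A` and `ε > 0` there are unitaries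
`z_g` with `‖α_g(a) - z_g a z_g*‖ < ε` for `a ∈ F` and `‖z_g z_h - z_{gh}‖ < ε` for all
`g, h`.  Then for every finite `F ⊆ A` and `ε > 0` there is an exact group homomorphism
`g ↦ w_g` into the unitary group with `‖α_g(a) - w_g a w_g*‖ < ε` for `g ∈ G`, `a ∈ F`. -/
theorem approx_hom_upgrades_to_hom
    {G : Type*} [Group G] [Fintype G] {A : Type*} [CStarAlgebra A]
    (α : G → (A ≃⋆ₐ[ℂ] A))
    (hα : ∀ (g h : G) (a : A), α (g * h) a = α g (α h a))
    (happrox : ∀ (F : Finset A) (ε : ℝ), 0 < ε → ∃ z : G → unitary A,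
      (∀ g : G, ∀ a ∈ F, ‖α g a - (z g : A) * a * star ((z g : A))‖ < ε) ∧
      (∀ g h : G, ‖(z g : A) * (z h : A) - ((z (g * h) : A))‖ < ε)) :
    ∀ (F : Finset A) (ε : ℝ), 0 < ε → ∃ w : G →* unitary A,
      ∀ g : G, ∀ a ∈ F, ‖α g a - (w g : A) * a * star ((w g : A))‖ < ε := fun F =>
  approx_hom_upgrades_to_hom_general (fun g a => α g a) F.finite_toSet.isBounded (happrox F)
end
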